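/- Let Z^J be the structure algebra of a parabolic Bruhat moment graph over the symmetric algebra S, and let ₛσ be the involution of Z^J defined by (ₛσ z)_x = τ_s(z_{(sx)^J}), where τ_s is the algebra automorphism of S induced by the reflection s on V. Then Z^J decomposes as a module over the invariants: Z^J = (Z^J)^{ₛσ} ⊕ ᾱ_s · (Z^J)^{ₛσ}, where ᾱ_s is the constant section with all components equal to α_s. -/

import Mathlib

/-- The set `W^J` of minimal length representatives of the cosets `W/W_J`. -/
def minReps {B W : Type*} [Group W] {M : CoxeterMatrix B}
    (cs : CoxeterSystem M W) (J : Set B) : Set W :=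
  {w | ∀ i ∈ J, cs.length w < cs.length (w * cs.simple i)}

/-- The structure algebra `Z^J` of the parabolic Bruhat moment graph: tuples
`(z_x)_{x ∈ W^J}` of elements of the base ring `S` (playing the role of `Sym(V)`)
such that `z_x - z_y` is divisible by the label `α_t` whenever `x` and `y = (tx)^J`
are joined by an edge coming from a reflection `t`. -/
def structAlg {B W : Type*} [Group W] {M : CoxeterMatrix B}
    (cs : CoxeterSystem M W) (J : Set B) (S : Type*) [CommRing S]
    (α : W → S) : Set ((minReps cs J) → S) :=
  {z | ∀ t : W, cs.IsReflection t → ∀ x y : minReps cs J,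
    (y : W)⁻¹ * (t * (x : W)) ∈ Subgroup.closure (cs.simple '' J) →
    z x - z y ∈ Ideal.span {α t}}

/-- The involution `ₛσ` on tuples: `(ₛσ z)_x = τ_s (z_{(sx)^J})`, where
`m : W → W^J` takes the minimal length representative of a coset. -/
def sigmaInvol {B W : Type*} [Group W] {M : CoxeterMatrix B}
    (cs : CoxeterSystem M W) (J : Set B) (S : Type*) [CommRing S]
    (τ : W →* RingAut S) (mrep : W → minReps cs J) (i : B)
    (z : (minReps cs J) → S) : (minReps cs J) → S :=
  fun x => τ (cs.simple i) (z (mrep (cs.simple i * (x : W))))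

/-!
On the vertices of the graph, `x ↦ (sx)^J` is an involution because a coset of `W_J` contains only
one element of `W^J`, which follows from the strong exchange condition. Since `τ_s` is trivial
modulo `α_s`, every `z ∈ Z^J` satisfies `z - ₛσ z = ᾱ_s q` for some tuple `q`, and `q` is
`ₛσ`-invariant because `τ_s α_s = -α_s` and `α_s` is a nonzerodivisor. Then
`z = (z + ₛσ z) / 2 + ᾱ_s (q / 2)`, so the point is that `q` lies in `Z^J`: along an edge with
reflection `t ≠ s` one cancels `α_s` modulo `α_t`, and along an edge `x — (sx)^J` invariance gives
`q_x = τ_s q_y ≡ q_y` modulo `α_s`.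
-/

section StrongExchange

open CoxeterSystem

variable {B W : Type*} [Group W] {M : CoxeterMatrix B} (cs : CoxeterSystem M W)

theorem even_count_leftInvSeq_alternatingWord [DecidableEq W] (i j : B) (t : W) :
    Even ((cs.leftInvSeq (alternatingWord i j (2 * M i j))).count t) := by
  set m := M i j
  set L := cs.leftInvSeq (alternatingWord i j (2 * m)) with hL
  have hlen : L.length = 2 * m := by simp [hL]
  have hperiodic : L.drop m = L.take m := by
    refine List.ext_getElem (by simp [hlen]; omega) fun k h₁ h₂ => ?_
    have hk : k < m := by simp at h₂; omega
    have hodd (n : ℕ) : (2 * n + 1) / 2 = n := by omega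
    rw [List.getElem_drop, List.getElem_take,
      cs.getElem_leftInvSeq_alternatingWord i j m (m + k) (by omega),
      cs.getElem_leftInvSeq_alternatingWord i j m k (by omega)]
    simp only [prod_alternatingWord_eq_mul_pow, hodd, pow_add, m, cs.simple_mul_simple_pow',
      one_mul, Nat.not_even_bit1, if_false]
  rw [← List.take_append_drop m L, hperiodic, List.count_append]
  exact Even.add_self _

/-- The permutation of `W × ℤ/2` by which a simple reflection acts in the representation whose
sign component counts inversions modulo two. The first factor is all of `W`, not only the
reflections. -/
def simpleInversionPerm [DecidableEq W] (i : B) : Equiv.Perm (W × ZMod 2) :=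
  Function.Involutive.toPerm
    (fun p => (cs.simple i * p.1 * cs.simple i, p.2 + if p.1 = cs.simple i then 1 else 0)) <| by
    rintro ⟨t, e⟩
    have hconj : cs.simple i * t * cs.simple i = cs.simple i ↔ t = cs.simple i := by
      rw [mul_eq_right, ← eq_inv_mul_iff_mul_eq, cs.inv_simple, mul_one]
    ext
    · simp [mul_assoc]
    · simp only [hconj, add_assoc, CharTwo.add_self_eq_zero, add_zero]

theorem simpleInversionPerm_apply [DecidableEq W] (i : B) (p : W × ZMod 2) :
    simpleInversionPerm cs i p =
      (cs.simple i * p.1 * cs.simple i, p.2 + if p.1 = cs.simple i then 1 else 0) :=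
  rfl

theorem simpleInversionPerm_simple [DecidableEq W] (i : B) (e : ZMod 2) :
    simpleInversionPerm cs i (cs.simple i, e) = (cs.simple i, e + 1) := by
  simp [simpleInversionPerm_apply]

theorem prod_map_simpleInversionPerm_apply [DecidableEq W] (ω : List B) (t : W) (e : ZMod 2) :
    (ω.map (simpleInversionPerm cs)).prod (t, e) =
      (cs.wordProd ω * t * (cs.wordProd ω)⁻¹, e + (cs.rightInvSeq ω).count t) := by
  induction ω with
  | nil => simp
  | cons i ω ih =>
    have hconj : cs.wordProd ω * t * (cs.wordProd ω)⁻¹ = cs.simple i ↔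
        (cs.wordProd ω)⁻¹ * cs.simple i * cs.wordProd ω = t := by
      rw [mul_inv_eq_iff_eq_mul, mul_assoc, inv_mul_eq_iff_eq_mul, eq_comm]
    rw [List.map_cons, List.prod_cons, Equiv.Perm.mul_apply, ih]
    ext
    · simp [simpleInversionPerm_apply, cs.wordProd_cons, mul_assoc]
    · simp [simpleInversionPerm_apply, hconj, rightInvSeq, List.count_cons, add_assoc]

theorem prod_map_reverse_alternatingWord {G : Type*} [Monoid G] (f : B → G) (i j : B) (m : ℕ) :
    ((alternatingWord j i (2 * m)).reverse.map f).prod = (f i * f j) ^ m := by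
  induction m with
  | zero => simp [alternatingWord]
  | succ m ih => simp [mul_add, alternatingWord_succ, ← ih, pow_succ', mul_assoc]

theorem isLiftable_simpleInversionPerm [DecidableEq W] : M.IsLiftable (simpleInversionPerm cs) := by
  intro i j
  ext1 ⟨t, e⟩
  have hword : cs.wordProd (alternatingWord j i (2 * M i j)).reverse = 1 := by
    rw [wordProd, prod_map_reverse_alternatingWord, cs.simple_mul_simple_pow]
  have hcount := (ZMod.natCast_eq_zero_iff_even).mpr
    (even_count_leftInvSeq_alternatingWord cs j i t)
  rw [← prod_map_reverse_alternatingWord, prod_map_simpleInversionPerm_apply, hword,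
    cs.rightInvSeq_reverse, List.count_reverse, M.symmetric i j, hcount]
  simp

/-- The action of `W` on `W × ℤ/2` extending `simpleInversionPerm`. The sign of `(t, e)` changes
under `w` according to the parity of the number of occurrences of `t` in the right inversion
sequence of any word for `w`. -/
def inversionPerm [DecidableEq W] : W →* Equiv.Perm (W × ZMod 2) :=
  cs.lift ⟨simpleInversionPerm cs, isLiftable_simpleInversionPerm cs⟩

theorem inversionPerm_simple [DecidableEq W] (i : B) :
    inversionPerm cs (cs.simple i) = simpleInversionPerm cs i :=
  cs.lift_apply_simple _ i

theorem inversionPerm_wordProd_apply [DecidableEq W] (ω : List B) (t : W) (e : ZMod 2) :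
    inversionPerm cs (cs.wordProd ω) (t, e) =
      (cs.wordProd ω * t * (cs.wordProd ω)⁻¹, e + (cs.rightInvSeq ω).count t) := by
  rw [← prod_map_simpleInversionPerm_apply, wordProd, map_list_prod, List.map_map]
  congr 3
  exact funext (inversionPerm_simple cs)

theorem exists_inversionPerm_apply [DecidableEq W] (w t : W) :
    ∃ c : ZMod 2, ∀ e, inversionPerm cs w (t, e) = (w * t * w⁻¹, e + c) := by
  obtain ⟨ω, rfl⟩ := cs.wordProd_surjective w
  exact ⟨_, inversionPerm_wordProd_apply cs ω t⟩

theorem inversionPerm_reflection [DecidableEq W] {t : W} (ht : cs.IsReflection t) (e : ZMod 2) :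
    inversionPerm cs t (t, e) = (t, e + 1) := by
  obtain ⟨u, i, rfl⟩ := ht
  obtain ⟨c, hc⟩ := exists_inversionPerm_apply cs u (cs.simple i)
  have hinv : inversionPerm cs u⁻¹ (u * cs.simple i * u⁻¹, e) = (cs.simple i, e - c) := by
    rw [map_inv, Equiv.Perm.inv_eq_iff_eq, hc, sub_add_cancel]
  rw [map_mul, map_mul, Equiv.Perm.mul_apply, Equiv.Perm.mul_apply, hinv, inversionPerm_simple,
    simpleInversionPerm_simple, hc, add_right_comm, sub_add_cancel]

theorem mem_rightInvSeq_of_isRightInversion {ω : List B} {t : W}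
    (h : cs.IsRightInversion (cs.wordProd ω) t) : t ∈ cs.rightInvSeq ω := by
  classical
  by_contra hω
  obtain ⟨η, hη, hη_prod⟩ := cs.exists_isReduced (cs.wordProd ω * t)
  have hsign : inversionPerm cs (cs.wordProd ω * t) (t, 0) =
      (cs.wordProd ω * t * (cs.wordProd ω)⁻¹, 1) := by
    rw [map_mul, Equiv.Perm.mul_apply, inversionPerm_reflection cs h.1,
      inversionPerm_wordProd_apply, List.count_eq_zero_of_not_mem hω]
    simp
  rw [hη_prod, inversionPerm_wordProd_apply] at hsign
  have hmem : t ∈ cs.rightInvSeq η := by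
    by_contra hnot
    simp [List.count_eq_zero_of_not_mem hnot] at hsign
  have hinv := cs.isRightInversion_of_mem_rightInvSeq hη hmem
  rw [← hη_prod, h.1.isRightInversion_mul_left_iff] at hinv
  exact hinv h

theorem exists_wordProd_eraseIdx_eq_mul {ω : List B} {t : W}
    (h : cs.IsRightInversion (cs.wordProd ω) t) :
    ∃ k < ω.length, cs.wordProd (ω.eraseIdx k) = cs.wordProd ω * t := by
  obtain ⟨k, hk, rfl⟩ := List.mem_iff_getElem.mp (mem_rightInvSeq_of_isRightInversion cs h)
  refine ⟨k, by simpa using hk, ?_⟩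
  rw [← cs.wordProd_mul_getD_rightInvSeq, List.getD_eq_getElem _ 1 hk]

end StrongExchange

section MinimalRepresentatives

variable {B W : Type*} [Group W] {M : CoxeterMatrix B} (cs : CoxeterSystem M W) {J : Set B}

/-- The standard parabolic subgroup `W_J`. -/
abbrev parabolic (J : Set B) : Subgroup W := Subgroup.closure (cs.simple '' J)

variable {cs}

theorem simple_mem_parabolic {j : B} (hj : j ∈ J) : cs.simple j ∈ parabolic cs J :=
  Subgroup.subset_closure (Set.mem_image_of_mem _ hj)

theorem mem_parabolic_iff_exists_wordProd {u : W} :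
    u ∈ parabolic cs J ↔ ∃ ω : List B, (∀ j ∈ ω, j ∈ J) ∧ cs.wordProd ω = u := by
  constructor
  · intro hu
    induction hu using Subgroup.closure_induction with
    | mem x hx =>
      obtain ⟨j, hj, rfl⟩ := hx
      exact ⟨[j], by simpa using hj, by simp⟩
    | one => exact ⟨[], by simp, by simp⟩
    | mul x y _ _ hx hy =>
      obtain ⟨ω, hω, rfl⟩ := hx
      obtain ⟨η, hη, rfl⟩ := hy
      exact ⟨ω ++ η, List.forall_mem_append.mpr ⟨hω, hη⟩, cs.wordProd_append ω η⟩
    | inv x _ hx =>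
      obtain ⟨ω, hω, rfl⟩ := hx
      exact ⟨ω.reverse, by simpa using hω, by simp⟩
  · rintro ⟨ω, hω, rfl⟩
    exact Subgroup.list_prod_mem _ (List.forall_mem_map.mpr fun j hj =>
      simple_mem_parabolic (hω j hj))

theorem exists_wordProd_eraseIdx_eq_mul_simple {m : W}
    (hm : ∀ u ∈ parabolic cs J, cs.length m ≤ cs.length (m * u))
    {ω : List B} (hω : ∀ j ∈ ω, j ∈ J) {j : B} (hj : j ∈ J)
    (hdesc : cs.IsRightDescent (m * cs.wordProd ω) j) :
    ∃ k < ω.length, cs.wordProd (ω.eraseIdx k) = cs.wordProd ω * cs.simple j := by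
  obtain ⟨η, hη, rfl⟩ := cs.exists_isReduced m
  rw [← cs.wordProd_append, ← cs.isRightInversion_simple_iff_isRightDescent] at hdesc
  obtain ⟨k, hk, herase⟩ := exists_wordProd_eraseIdx_eq_mul cs hdesc
  rw [cs.wordProd_append, mul_assoc] at herase
  rcases lt_or_ge k η.length with hkη | hkη
  · -- A letter erased from `η` would leave a shorter element of the coset of `m`.
    rw [List.eraseIdx_append_of_lt_length hkη, cs.wordProd_append, ← eq_mul_inv_iff_mul_eq,
      mul_assoc] at herase
    have hmem : cs.wordProd ω * cs.simple j * (cs.wordProd ω)⁻¹ ∈ parabolic cs J :=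
      have hω_mem := mem_parabolic_iff_exists_wordProd.mpr ⟨ω, hω, rfl⟩
      mul_mem (mul_mem hω_mem (simple_mem_parabolic hj)) (inv_mem hω_mem)
    have hmin := hm _ hmem
    rw [← herase, hη.eq] at hmin
    have hshort := cs.length_wordProd_le (η.eraseIdx k)
    have := List.length_eraseIdx_add_one hkη
    omega
  · rw [List.eraseIdx_append_of_length_le hkη, cs.wordProd_append, mul_right_inj] at herase
    rw [List.length_append] at hk
    exact ⟨k - η.length, by omega, herase⟩

theorem wordProd_eq_one_of_mul_mem_minReps {m : W}
    (hm : ∀ u ∈ parabolic cs J, cs.length m ≤ cs.length (m * u))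
    {ω : List B} (hω : ∀ j ∈ ω, j ∈ J) (hmω : m * cs.wordProd ω ∈ minReps cs J) :
    cs.wordProd ω = 1 := by
  induction hn : ω.length using Nat.strong_induction_on generalizing ω with
  | _ n ih =>
    rcases List.eq_nil_or_concat' ω with rfl | ⟨η, j, rfl⟩
    · exact cs.wordProd_nil
    obtain ⟨hη, hj⟩ : (∀ k ∈ η, k ∈ J) ∧ j ∈ J := by
      simpa [or_imp, forall_and] using hω
    have hprod : cs.wordProd (η ++ [j]) = cs.wordProd η * cs.simple j := by
      rw [cs.wordProd_append, cs.wordProd_singleton]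
    have hdesc : cs.IsRightDescent (m * cs.wordProd η) j := by
      simpa [hprod, CoxeterSystem.IsRightDescent, ← mul_assoc] using hmω j hj
    obtain ⟨k, hk, herase⟩ := exists_wordProd_eraseIdx_eq_mul_simple hm hη hj hdesc
    rw [← hprod] at herase
    have hlen : (η.eraseIdx k).length < n := by
      have := List.length_eraseIdx_add_one hk
      simp only [List.length_append, List.length_singleton] at hn
      omega
    rw [← herase] at hmω ⊢
    exact ih _ hlen (fun c hc => hη c (List.mem_of_mem_eraseIdx hc)) hmω rfl

theorem eq_of_mem_minReps {x y : W} (hx : x ∈ minReps cs J) (hy : y ∈ minReps cs J)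
    (hxy : x⁻¹ * y ∈ parabolic cs J) : x = y := by
  obtain ⟨u, hu, hmin⟩ := WellFounded.has_min (measure fun u : W => cs.length (x * u)).wf
    (parabolic cs J : Set W) ⟨1, one_mem _⟩
  have hm (v : W) (hv : v ∈ parabolic cs J) : cs.length (x * u) ≤ cs.length (x * u * v) := by
    rw [mul_assoc]
    exact not_lt.mp (hmin _ (mul_mem hu hv))
  have eq_min {v : W} (hv : v ∈ minReps cs J) (hxv : x⁻¹ * v ∈ parabolic cs J) : x * u = v := by
    obtain ⟨ω, hω, hprod⟩ := mem_parabolic_iff_exists_wordProd.mp (mul_mem (inv_mem hu) hxv)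
    have hv_eq : v = x * u * cs.wordProd ω := by rw [hprod]; group
    rw [hv_eq, wordProd_eq_one_of_mul_mem_minReps hm hω (hv_eq ▸ hv), mul_one]
  rw [← eq_min hx (by simp), eq_min hy hxy]

variable {mrep : W → minReps cs J} (hmrep : ∀ w : W, ((mrep w : W))⁻¹ * w ∈ parabolic cs J)
include hmrep

theorem minRep_eq_iff {w : W} {x : minReps cs J} :
    mrep w = x ↔ (x : W)⁻¹ * w ∈ parabolic cs J := by
  refine ⟨fun h => h ▸ hmrep w, fun hx => Subtype.ext ?_⟩
  refine (eq_of_mem_minReps x.2 (mrep w).2 ?_).symm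
  simpa [mul_assoc] using mul_mem hx (inv_mem (hmrep w))

theorem minRep_simple_mul_involutive (i : B) :
    Function.Involutive fun x : minReps cs J => mrep (cs.simple i * x) := by
  intro x
  rw [minRep_eq_iff hmrep]
  simpa [mul_assoc] using inv_mem (hmrep (cs.simple i * x))

end MinimalRepresentatives

section InvolutionDecomposition

variable {R M : Type*} [CommRing R] [AddCommGroup M] [Module R M] {σ : M →+ M} {a : R}

theorem map_eq_self_of_sub_map_eq_smul (hσ : Function.Involutive σ)
    (hσa : ∀ z, σ (a • z) = -(a • σ z)) (ha : IsSMulRegular M a) {z q : M}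
    (hz : z - σ z = a • q) : σ q = q := by
  refine ha (neg_injective ?_)
  change -(a • σ q) = -(a • q)
  rw [← hσa, ← hz, map_sub, hσ, neg_sub]

theorem exists_eq_add_smul_of_sub_map_eq_smul (h2 : IsUnit (2 : R)) (hσ : Function.Involutive σ)
    {N : Submodule R M} {z q : M} (hzN : z ∈ N) (hqN : q ∈ N) (hq : σ q = q)
    (hz : z - σ z = a • q) :
    ∃ p ∈ N, ∃ q ∈ N, σ p = p ∧ σ q = q ∧ z = p + a • q := by
  obtain ⟨c, hc⟩ := h2.exists_left_inv
  have hσzN : σ z ∈ N := by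
    rw [← sub_sub_cancel z (σ z), hz]
    exact N.sub_mem hzN (N.smul_mem a hqN)
  have half_add (w : M) : c • w + c • w = w := by
    rw [← two_smul R, smul_comm, smul_smul, hc, one_smul]
  have map_half {w : M} (hw : σ w = w) : σ (c • w) = c • w := by
    calc σ (c • w) = c • (σ (c • w) + σ (c • w)) := by rw [smul_add, half_add]
      _ = c • w := by rw [← map_add, half_add, hw]
  refine ⟨c • (z + σ z), N.smul_mem c (N.add_mem hzN hσzN), c • q, N.smul_mem c hqN,
    map_half ?_, map_half hq, ?_⟩
  · rw [map_add, hσ, add_comm]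
  · rw [smul_comm a c, ← hz, ← smul_add, add_add_sub_cancel, smul_add, half_add]

theorem eq_zero_of_add_smul_eq_zero (h2 : IsUnit (2 : R)) (hσa : ∀ z, σ (a • z) = -(a • σ z))
    (ha : IsSMulRegular M a) {p q : M} (hp : σ p = p) (hq : σ q = q) (h : p + a • q = 0) :
    p = 0 ∧ q = 0 := by
  have hneg : p - a • q = 0 := by
    simpa [hσa, hp, hq, sub_eq_add_neg] using congrArg σ h
  have hp0 : p = 0 := by
    rw [← h2.smul_eq_zero (x := p), two_smul, ← add_zero 0, ← congrArg₂ (· + ·) h hneg]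
    abel
  rw [hp0, zero_add] at h
  exact ⟨hp0, ha.right_eq_zero_of_smul h⟩

end InvolutionDecomposition

section StructureAlgebra

variable {B W : Type*} [Group W] {M : CoxeterMatrix B} (cs : CoxeterSystem M W) (J : Set B)
  (S : Type*) [CommRing S]

/-- The structure algebra `Z^J` as an `S`-submodule of the module of all tuples. -/
def structSubmodule (α : W → S) : Submodule S (minReps cs J → S) where
  carrier := structAlg cs J S α
  zero_mem' := fun t _ x y _ => by simp
  add_mem' := fun hz hw t ht x y hxy => by
    simpa [add_sub_add_comm] using add_mem (hz t ht x y hxy) (hw t ht x y hxy)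
  smul_mem' := fun c z hz t ht x y hxy => by
    simpa [mul_sub] using Ideal.mul_mem_left _ c (hz t ht x y hxy)

variable (τ : W →* RingAut S) (mrep : W → minReps cs J) (i : B)

/-- The involution `ₛσ` as an additive endomorphism of the module of all tuples. -/
def sigmaHom : (minReps cs J → S) →+ (minReps cs J → S) where
  toFun := sigmaInvol cs J S τ mrep i
  map_zero' := funext fun _ => map_zero _
  map_add' _ _ := funext fun _ => map_add _ _ _

variable {cs J S τ mrep i}

theorem sigmaInvol_apply (z : minReps cs J → S) (x : minReps cs J) :
    sigmaInvol cs J S τ mrep i z x = τ (cs.simple i) (z (mrep (cs.simple i * x))) :=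
  rfl

theorem map_simple_involutive : Function.Involutive (τ (cs.simple i)) := fun b => by
  rw [← RingAut.mul_apply, ← map_mul, cs.simple_mul_simple_self, map_one, RingAut.one_apply]

theorem sigmaHom_smul_of_map_eq_neg {a : S} (ha : τ (cs.simple i) a = -a)
    (z : minReps cs J → S) :
    sigmaHom cs J S τ mrep i (a • z) = -(a • sigmaHom cs J S τ mrep i z) := by
  ext x
  simp [sigmaHom, sigmaInvol_apply, ha]

variable (hmrep : ∀ w : W, ((mrep w : W))⁻¹ * w ∈ parabolic cs J)
include hmrep

theorem sigmaInvol_involutive : Function.Involutive (sigmaInvol cs J S τ mrep i) := fun z => by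
  ext x
  rw [sigmaInvol_apply, sigmaInvol_apply, map_simple_involutive]
  exact congrArg z (minRep_simple_mul_involutive hmrep i x)

variable {α : W → S}

theorem sigmaInvol_mem_structAlg
    (hconj : ∀ t : W, cs.IsReflection t →
      α (cs.simple i * t * (cs.simple i)⁻¹) ∣ τ (cs.simple i) (α t))
    {z : minReps cs J → S} (hz : z ∈ structAlg cs J S α) :
    sigmaInvol cs J S τ mrep i z ∈ structAlg cs J S α := by
  intro t ht x y hxy
  have ht' : cs.IsReflection (cs.simple i * t * (cs.simple i)⁻¹) := ht.conj (cs.simple i)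
  have hedge : ((mrep (cs.simple i * y) : W))⁻¹ *
      (cs.simple i * t * (cs.simple i)⁻¹ * mrep (cs.simple i * x)) ∈ parabolic cs J := by
    convert mul_mem (mul_mem (hmrep (cs.simple i * y)) hxy) (inv_mem (hmrep (cs.simple i * x)))
      using 1
    group
  have hlabel : α t ∣ τ (cs.simple i) (α (cs.simple i * t * (cs.simple i)⁻¹)) := by
    simpa [mul_assoc] using hconj _ ht'
  have hdvd := Ideal.mem_span_singleton.mp (hz _ ht' _ _ hedge)
  rw [Ideal.mem_span_singleton, sigmaInvol_apply, sigmaInvol_apply, ← map_sub]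
  exact hlabel.trans (map_dvd (τ (cs.simple i)) hdvd)

theorem dvd_sub_sigmaInvol_apply
    (hmod : ∀ p : S, τ (cs.simple i) p - p ∈ Ideal.span {α (cs.simple i)})
    {z : minReps cs J → S} (hz : z ∈ structAlg cs J S α) (x : minReps cs J) :
    α (cs.simple i) ∣ z x - sigmaInvol cs J S τ mrep i z x := by
  rw [← Ideal.mem_span_singleton, sigmaInvol_apply, ← sub_sub_sub_cancel_right _ _ (z _)]
  exact sub_mem (hz _ (cs.isReflection_simple i) x _ (hmrep _)) (hmod _)

theorem mem_structAlg_of_smul_mem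
    (hmod : ∀ p : S, τ (cs.simple i) p - p ∈ Ideal.span {α (cs.simple i)})
    (hcancel : ∀ t : W, cs.IsReflection t → t ≠ cs.simple i → ∀ b : S,
      α t ∣ α (cs.simple i) * b → α t ∣ b)
    {q : minReps cs J → S} (hq : sigmaInvol cs J S τ mrep i q = q)
    (haq : α (cs.simple i) • q ∈ structAlg cs J S α) : q ∈ structAlg cs J S α := by
  intro t ht x y hxy
  rcases eq_or_ne t (cs.simple i) with rfl | hts
  · have hqx : τ (cs.simple i) (q y) = q x := by
      rw [← (minRep_eq_iff hmrep).mpr hxy, ← sigmaInvol_apply, hq]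
    exact hqx ▸ hmod (q y)
  · rw [Ideal.mem_span_singleton]
    refine hcancel t ht hts _ ?_
    simpa [Ideal.mem_span_singleton, mul_sub] using haq t ht x y hxy

theorem exists_sub_sigmaInvol_eq_smul
    (hτα : τ (cs.simple i) (α (cs.simple i)) = -α (cs.simple i))
    (hmod : ∀ p : S, τ (cs.simple i) p - p ∈ Ideal.span {α (cs.simple i)})
    (hconj : ∀ t : W, cs.IsReflection t →
      α (cs.simple i * t * (cs.simple i)⁻¹) ∣ τ (cs.simple i) (α t))
    (hreg : IsSMulRegular S (α (cs.simple i)))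
    (hcancel : ∀ t : W, cs.IsReflection t → t ≠ cs.simple i → ∀ b : S,
      α t ∣ α (cs.simple i) * b → α t ∣ b)
    {z : minReps cs J → S} (hz : z ∈ structAlg cs J S α) :
    ∃ q ∈ structAlg cs J S α, sigmaInvol cs J S τ mrep i q = q ∧
      z - sigmaInvol cs J S τ mrep i z = α (cs.simple i) • q := by
  choose q hq using dvd_sub_sigmaInvol_apply hmrep hmod hz
  have hzq : z - sigmaInvol cs J S τ mrep i z = α (cs.simple i) • q := funext hq
  have hσq : sigmaInvol cs J S τ mrep i q = q :=
    map_eq_self_of_sub_map_eq_smul (σ := sigmaHom cs J S τ mrep i)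
      (sigmaInvol_involutive hmrep) (sigmaHom_smul_of_map_eq_neg hτα) (.pi fun _ => hreg) hzq
  refine ⟨q, mem_structAlg_of_smul_mem hmrep hmod hcancel hσq ?_, hσq, hzq⟩
  exact hzq ▸ (structSubmodule cs J S α).sub_mem hz (sigmaInvol_mem_structAlg hmrep hconj hz)

end StructureAlgebra

theorem structAlg_invariant_decomposition_general {B W : Type*} [Group W] {M : CoxeterMatrix B}
    (cs : CoxeterSystem M W) (J : Set B) (S : Type*) [CommRing S]
    (τ : W →* RingAut S) (α : W → S) (mrep : W → minReps cs J)
    (hmrep : ∀ w : W, ((mrep w : W))⁻¹ * w ∈ parabolic cs J) (i : B) (h2 : IsUnit (2 : S))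
    (hτα : τ (cs.simple i) (α (cs.simple i)) = -α (cs.simple i))
    (hmod : ∀ p : S, τ (cs.simple i) p - p ∈ Ideal.span {α (cs.simple i)})
    (hconj : ∀ t : W, cs.IsReflection t →
      α (cs.simple i * t * (cs.simple i)⁻¹) ∣ τ (cs.simple i) (α t))
    (hreg : IsSMulRegular S (α (cs.simple i)))
    (hcancel : ∀ t : W, cs.IsReflection t → t ≠ cs.simple i → ∀ b : S,
      α t ∣ α (cs.simple i) * b → α t ∣ b) :
    (∀ z ∈ structAlg cs J S α, ∃ p ∈ structAlg cs J S α, ∃ q ∈ structAlg cs J S α,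
      sigmaInvol cs J S τ mrep i p = p ∧ sigmaInvol cs J S τ mrep i q = q ∧
      z = p + α (cs.simple i) • q) ∧
    (∀ p ∈ structAlg cs J S α, ∀ q ∈ structAlg cs J S α,
      sigmaInvol cs J S τ mrep i p = p → sigmaInvol cs J S τ mrep i q = q →
      p + α (cs.simple i) • q = 0 → p = 0 ∧ q = 0) := by
  refine ⟨fun z hz => ?_, fun p _ q _ hp hq h => ?_⟩
  · obtain ⟨q, hqZ, hq, hzq⟩ :=
      exists_sub_sigmaInvol_eq_smul hmrep hτα hmod hconj hreg hcancel hz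
    exact exists_eq_add_smul_of_sub_map_eq_smul (σ := sigmaHom cs J S τ mrep i)
      (N := structSubmodule cs J S α) h2 (sigmaInvol_involutive hmrep) hz hqZ hq hzq
  · exact eq_zero_of_add_smul_eq_zero (σ := sigmaHom cs J S τ mrep i) h2
      (sigmaHom_smul_of_map_eq_neg hτα) (.pi fun _ => hreg) hp hq h

/-- the structure algebra decomposes over the `ₛσ`-invariants as
`Z^J = (Z^J)^{ₛσ} ⊕ ᾱ_s · (Z^J)^{ₛσ}`: every `z ∈ Z^J` is uniquely `p + ᾱ_s • q`
with `p, q` invariant elements of `Z^J`. -/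
theorem structAlg_invariant_decomposition {B W : Type*} [Group W] {M : CoxeterMatrix B}
    (cs : CoxeterSystem M W) (J : Set B)
    (S : Type*) [CommRing S] [IsDomain S]
    (τ : W →* RingAut S) (α : W → S)
    (mrep : W → minReps cs J)
    (hmrep : ∀ w : W, ((mrep w : W))⁻¹ * w ∈ Subgroup.closure (cs.simple '' J))
    (i : B)
    (h2 : IsUnit (2 : S))
    (hτα : τ (cs.simple i) (α (cs.simple i)) = - α (cs.simple i))
    (hmod : ∀ p : S, τ (cs.simple i) p - p ∈ Ideal.span {α (cs.simple i)})
    (hconj : ∀ t : W, cs.IsReflection t → ∃ u : Sˣ,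
      τ (cs.simple i) (α t) = (u : S) * α (cs.simple i * t * (cs.simple i)⁻¹))
    (hprime : ∀ t : W, cs.IsReflection t → Prime (α t))
    (hlin : ∀ t : W, cs.IsReflection t → t ≠ cs.simple i →
      α (cs.simple i) ∉ Ideal.span {α t}) :
    (∀ z ∈ structAlg cs J S α, ∃ p ∈ structAlg cs J S α, ∃ q ∈ structAlg cs J S α,
      sigmaInvol cs J S τ mrep i p = p ∧ sigmaInvol cs J S τ mrep i q = q ∧
      z = p + α (cs.simple i) • q) ∧
    (∀ p ∈ structAlg cs J S α, ∀ q ∈ structAlg cs J S α,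
      sigmaInvol cs J S τ mrep i p = p → sigmaInvol cs J S τ mrep i q = q →
      p + α (cs.simple i) • q = 0 → p = 0 ∧ q = 0) :=
  structAlg_invariant_decomposition_general cs J S τ α mrep hmrep i h2 hτα hmod
    (fun t ht => (hconj t ht).elim fun _ hu => hu ▸ Dvd.intro_left _ rfl)
    (IsSMulRegular.of_ne_zero (hprime _ (cs.isReflection_simple i)).ne_zero)
    fun t ht hts _ hb => ((hprime t ht).dvd_or_dvd hb).resolve_left fun h =>
      hlin t ht hts (Ideal.mem_span_singleton.mpr h)
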